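/- Let A ≥ 0 and B > 0 be real numbers. For every real γ with γ > −1, the function value log(1+γ) − γ + (1+γ)·A/(A+B) is at most log(1 + A/B), and equality holds when γ = A/B. In particular, the maximum over γ of log(1+γ) − γ + (1+γ)A/(A+B) is attained at γ = A/B with maximal value log(1 + A/B). -/

import Mathlib

/-!
With `x = 1 + γ` and `y = 1 + A / B`, the objective equals `log x - (x / y - 1)`. Concavity places
`log x` below the tangent line `log y + (x / y - 1)` at `y`, which it touches at `x = y`.
-/

theorem log_le_log_add_div_sub_one {x y : ℝ} (hx : 0 < x) (hy : 0 < y) :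
    Real.log x ≤ Real.log y + (x / y - 1) := by
  have h := Real.log_le_sub_one_of_pos (div_pos hx hy)
  rwa [Real.log_div hx.ne' hy.ne', sub_le_iff_le_add'] at h

theorem mul_div_add_eq_sub_div_one_add_div {K : Type*} [Field K] {a b : K} (hb : b ≠ 0)
    (hab : 1 + a / b ≠ 0) (t : K) : t * a / (a + b) = t - t / (1 + a / b) := by
  have one_add_eq : 1 + a / b = (a + b) / b := by rw [one_add_div hb, add_comm b]
  have sum_ne_zero : a + b ≠ 0 := (div_ne_zero_iff.mp (one_add_eq ▸ hab)).1
  rw [one_add_eq]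
  field_simp
  ring

theorem lagrangian_dual_transform_general (A B : ℝ) (hB : B ≠ 0) (hAB : -1 < A / B) :
    (∀ γ : ℝ, γ > -1 →
      Real.log (1 + γ) - γ + (1 + γ) * A / (A + B) ≤ Real.log (1 + A / B)) ∧
    Real.log (1 + A / B) - A / B + (1 + A / B) * A / (A + B) = Real.log (1 + A / B) := by
  have ratio_pos : 0 < 1 + A / B := by linarith
  have objective_eq (γ : ℝ) : Real.log (1 + γ) - γ + (1 + γ) * A / (A + B) =
      Real.log (1 + γ) - ((1 + γ) / (1 + A / B) - 1) := by
    rw [mul_div_add_eq_sub_div_one_add_div hB ratio_pos.ne']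
    ring
  constructor
  · intro γ hγ
    rw [objective_eq, sub_le_iff_le_add]
    exact log_le_log_add_div_sub_one (by linarith) ratio_pos
  · rw [objective_eq, div_self ratio_pos.ne', sub_self, sub_zero]

/-- Lemma 1 (Modified Lagrangian Dual Transform), single-ratio form: for `A ≥ 0`, `B > 0`,
the function `γ ↦ log (1 + γ) - γ + (1 + γ) * A / (A + B)` is at most `log (1 + A / B)`
for every `γ > -1`, with equality at `γ = A / B`. -/
theorem lagrangian_dual_transform (A B : ℝ) (hA : 0 ≤ A) (hB : 0 < B) :
    (∀ γ : ℝ, γ > -1 →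
      Real.log (1 + γ) - γ + (1 + γ) * A / (A + B) ≤ Real.log (1 + A / B)) ∧
    Real.log (1 + A / B) - A / B + (1 + A / B) * A / (A + B) = Real.log (1 + A / B) :=
  lagrangian_dual_transform_general A B hB.ne' (neg_one_lt_zero.trans_le (div_nonneg hA hB.le))
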